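/- The parabolic basin Λ_ω is an open subset of ℂ and equals the interior of the augmented basin Λ̃_ω; consequently Λ̃_ω is the disjoint union of the open set Λ_ω and the countable backward orbit {z ∈ ℂ : ∃ n ≥ 0, P_ω^n(z) = 0} of the parabolic fixed point. -/

import Mathlib

open Complex Filter Topology Set

/-- The quadratic polynomial `P_ω(z) = ω z + z²`. -/
noncomputable def Pq (ω : ℂ) : ℂ → ℂ := fun z => ω * z + z ^ 2

/-- The augmented parabolic basin `Λ̃_ω`: points whose orbit converges to `0`. -/
def basinAug (ω : ℂ) : Set ℂ := {z | Tendsto (fun n => (Pq ω)^[n] z) atTop (𝓝 0)}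

/-- The backward orbit of the parabolic fixed point `0`. -/
def preFixed (ω : ℂ) : Set ℂ := {z | ∃ n : ℕ, (Pq ω)^[n] z = 0}

/-- The parabolic basin `Λ_ω`. -/
def basin (ω : ℂ) : Set ℂ := basinAug ω \ preFixed ω

/-!
If `ω ^ q = 1`, the iterate `P_ω^q` is tangent to the identity at `0`, say
`P_ω^q(z) = z + a z^(k+1) + ⋯` with `a ≠ 0`. In the coordinate `w = -1 / (k a z^k)` it is close to
`w ↦ w + 1` near `0`, so a half-plane `Re w > R` consists of points attracted to `0` that never
reach it, and every orbit converging to `0` without reaching it enters this half-plane. Hence the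
basin is a union of preimages of an open set.

Conversely, no preimage of `0` is interior to the augmented basin. Since `P_ω` is open, it suffices
to treat `0` itself. If the orbits of all points near `0` converged to `0`, then the Cauchy formula
and dominated convergence (the augmented basin is bounded) would make the derivatives of `P_ω^n`
at `0` tend to `0`, whereas their modulus is `|ω|^n = 1`.
-/

open Function Metric

section AttractedSet

variable {X : Type*} {f : X → X} {x z : X}

/-- The points some iterate of `f` maps to `x`: the set `preFixed ω` for an arbitrary self-map. -/
def backwardOrbit (f : X → X) (x : X) : Set X := {z | ∃ n : ℕ, f^[n] z = x}

lemma iterate_mem_backwardOrbit_iff (hx : IsFixedPt f x) (n : ℕ) :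
    f^[n] z ∈ backwardOrbit f x ↔ z ∈ backwardOrbit f x := by
  constructor
  · rintro ⟨m, hm⟩
    exact ⟨m + n, by rw [iterate_add_apply, hm]⟩
  · rintro ⟨m, hm⟩
    exact ⟨m, by rw [← iterate_add_apply, add_comm, iterate_add_apply, hm, iterate_fixed hx]⟩

lemma backwardOrbit_iterate (hx : IsFixedPt f x) {q : ℕ} (hq : q ≠ 0) :
    backwardOrbit f^[q] x = backwardOrbit f x := by
  ext z
  constructor
  · rintro ⟨n, hn⟩
    exact ⟨q * n, by rw [iterate_mul, hn]⟩
  · rintro ⟨n, hn⟩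
    obtain ⟨m, hm⟩ := Nat.exists_eq_add_of_le' (Nat.le_mul_of_pos_left n (Nat.pos_of_ne_zero hq))
    exact ⟨n, by rw [← iterate_mul, hm, iterate_add_apply, hn, iterate_fixed hx]⟩

lemma countable_backwardOrbit (hf : ∀ y, (f ⁻¹' {y}).Finite) (x : X) :
    (backwardOrbit f x).Countable := by
  have finite_fiber (n : ℕ) : (f^[n] ⁻¹' {x}).Finite := by
    induction n with
    | zero => simp
    | succ n ih =>
      rw [iterate_succ, preimage_comp]
      exact ih.preimage' fun y _ ↦ hf y
  have : backwardOrbit f x = ⋃ n : ℕ, f^[n] ⁻¹' {x} := by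
    ext z
    simp [backwardOrbit]
  rw [this]
  exact countable_iUnion fun n ↦ (finite_fiber n).countable

variable [TopologicalSpace X]

/-- The points whose orbit under `f` converges to `x`: the set `basinAug ω` for an arbitrary
self-map. -/
def attractedSet (f : X → X) (x : X) : Set X := {z | Tendsto (fun n ↦ f^[n] z) atTop (𝓝 x)}

/-- The points whose orbit under `f` converges to `x` without ever reaching it: the set `basin ω`
for an arbitrary self-map. -/
def properBasin (f : X → X) (x : X) : Set X := attractedSet f x \ backwardOrbit f x

lemma iterate_mem_attractedSet_iff (n : ℕ) : f^[n] z ∈ attractedSet f x ↔ z ∈ attractedSet f x := by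
  simp only [attractedSet, mem_ofPred_eq, ← iterate_add_apply]
  exact tendsto_add_atTop_iff_nat (f := fun m ↦ f^[m] z) n

lemma backwardOrbit_subset_attractedSet (hx : IsFixedPt f x) :
    backwardOrbit f x ⊆ attractedSet f x := by
  rintro z ⟨n, hn⟩
  have hmem : x ∈ attractedSet f x := by
    simp [attractedSet, iterate_fixed hx, tendsto_const_nhds]
  rwa [← hn, iterate_mem_attractedSet_iff, hn] at hmem

lemma attractedSet_iterate (hf : ContinuousAt f x) (hx : IsFixedPt f x) {q : ℕ} (hq : q ≠ 0) :
    attractedSet f^[q] x = attractedSet f x := by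
  ext z
  simp only [attractedSet, mem_ofPred_eq]
  constructor <;> intro h
  · have shifted (r : ℕ) : Tendsto (fun n ↦ f^[r] ((f^[q])^[n] z)) atTop (𝓝 x) := by
      simpa only [iterate_fixed hx, comp_def] using (hf.iterate hx r).tendsto.comp h
    refine tendsto_def.2 fun U hU ↦ ?_
    have allResidues : ∀ᶠ n in atTop, ∀ r ∈ Finset.range q, f^[r] ((f^[q])^[n] z) ∈ U :=
      (eventually_all_finset _).2 fun r _ ↦ shifted r hU
    filter_upwards [(Nat.tendsto_div_const_atTop hq).eventually allResidues] with n hn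
    have := hn (n % q) (Finset.mem_range.2 (n.mod_lt (Nat.pos_of_ne_zero hq)))
    rwa [← iterate_mul, ← iterate_add_apply, Nat.mod_add_div] at this
  · simp only [← iterate_mul]
    exact h.comp (tendsto_id.const_mul_atTop' (Nat.pos_of_ne_zero hq))

lemma properBasin_iterate (hf : ContinuousAt f x) (hx : IsFixedPt f x) {q : ℕ} (hq : q ≠ 0) :
    properBasin f^[q] x = properBasin f x := by
  rw [properBasin, properBasin, attractedSet_iterate hf hx hq, backwardOrbit_iterate hx hq]

lemma preimage_iterate_interior_attractedSet (hf : Continuous f) (hopen : IsOpenMap f) (n : ℕ) :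
    f^[n] ⁻¹' interior (attractedSet f x) = interior (attractedSet f x) := by
  have step : IsFixedPt (preimage f) (interior (attractedSet f x)) := by
    rw [IsFixedPt, hopen.preimage_interior_eq_interior_preimage hf]
    congr 1
    ext z
    exact iterate_mem_attractedSet_iff 1
  rw [preimage_iterate_eq]
  exact step.iterate n

lemma properBasin_eq_interior_attractedSet (hf : Continuous f) (hopen : IsOpenMap f)
    (hbasin : IsOpen (properBasin f x)) (hx : x ∉ interior (attractedSet f x)) :
    properBasin f x = interior (attractedSet f x) := by
  refine (interior_maximal sdiff_subset hbasin).antisymm fun z hz ↦ ⟨interior_subset hz, ?_⟩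
  rintro ⟨n, hn⟩
  rw [← preimage_iterate_interior_attractedSet hf hopen n, mem_preimage, hn] at hz
  exact hx hz

end AttractedSet

section Drift

lemma tendsto_atTop_of_eventually_add_le_succ {u : ℕ → ℝ} {ε : ℝ} (hε : 0 < ε)
    (hu : ∀ᶠ n in atTop, u n + ε ≤ u (n + 1)) : Tendsto u atTop atTop := by
  obtain ⟨N, hN⟩ := eventually_atTop.1 hu
  have linear (m : ℕ) : u N + m * ε ≤ u (m + N) := by
    induction m with
    | zero => simp
    | succ m ih =>
      have := hN (m + N) (Nat.le_add_left N m)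
      rw [add_right_comm m 1 N]
      push_cast
      linarith
  rw [← tendsto_add_atTop_iff_nat N]
  exact tendsto_atTop_mono linear <| tendsto_atTop_add_const_left _ _ <|
    tendsto_natCast_atTop_atTop.atTop_mul_const hε

variable {X : Type*} [TopologicalSpace X] {f : X → X} {x : X} {h : X → ℝ} {ε R : ℝ}

lemma superlevel_subset_properBasin_of_drift (hε : 0 < ε) (hlarge : comap h atTop ≤ 𝓝[≠] x)
    (hR : ∀ z, R < h z → z ≠ x ∧ h z + ε ≤ h (f z)) : {z | R < h z} ⊆ properBasin f x := by
  intro z hz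
  have invariant : MapsTo f {y | R < h y} {y | R < h y} := fun y (hy : R < h y) ↦
    hy.trans (by linarith [(hR y hy).2])
  have stays (n : ℕ) : R < h (f^[n] z) := invariant.iterate n hz
  have grows : Tendsto (fun n ↦ h (f^[n] z)) atTop atTop :=
    tendsto_atTop_of_eventually_add_le_succ hε <| .of_forall fun n ↦ by
      rw [iterate_succ_apply']
      exact (hR _ (stays n)).2
  refine ⟨?_, fun ⟨n, hn⟩ ↦ (hR _ (stays n)).1 hn⟩
  exact (tendsto_comap_iff.2 grows).mono_right (hlarge.trans nhdsWithin_le_nhds)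

lemma tendsto_iterate_atTop_of_drift (hε : 0 < ε) (hdrift : ∀ᶠ z in 𝓝[≠] x, h z + ε ≤ h (f z))
    {z : X} (hz : z ∈ properBasin f x) : Tendsto (fun n ↦ h (f^[n] z)) atTop atTop := by
  have punctured : Tendsto (fun n ↦ f^[n] z) atTop (𝓝[≠] x) :=
    tendsto_nhdsWithin_iff.2 ⟨hz.1, .of_forall fun n hn ↦ hz.2 ⟨n, hn⟩⟩
  refine tendsto_atTop_of_eventually_add_le_succ hε ?_
  simpa only [iterate_succ_apply'] using punctured.eventually hdrift

/-- The superlevel sets of `h` play the role of attracting petals. -/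
theorem isOpen_properBasin_of_drift [T1Space X] (hf : Continuous f) (hx : IsFixedPt f x)
    (hε : 0 < ε) (hcont : ContinuousOn h {x}ᶜ) (hlarge : comap h atTop ≤ 𝓝[≠] x)
    (hdrift : ∀ᶠ z in 𝓝[≠] x, h z + ε ≤ h (f z)) : IsOpen (properBasin f x) := by
  obtain ⟨R, hR⟩ : ∃ R, ∀ z, R < h z → z ≠ x ∧ h z + ε ≤ h (f z) := by
    have hnear : ∀ᶠ z in comap h atTop, z ≠ x ∧ h z + ε ≤ h (f z) :=
      hlarge (eventually_mem_nhdsWithin.and hdrift)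
    obtain ⟨R, hR⟩ := eventually_atTop.1 (eventually_comap.1 hnear)
    exact ⟨R, fun z hz ↦ hR _ hz.le z rfl⟩
  have isOpen_petal : IsOpen {z | R < h z} := by
    have : {z | R < h z} = {x}ᶜ ∩ h ⁻¹' Ioi R :=
      (inter_eq_right.2 fun z hz ↦ (hR z hz).1).symm
    rw [this]
    exact hcont.isOpen_inter_preimage isOpen_compl_singleton isOpen_Ioi
  have exhausted : properBasin f x = ⋃ n : ℕ, f^[n] ⁻¹' {z | R < h z} := by
    ext z
    rw [mem_iUnion]
    constructor
    · exact fun hz ↦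
        ((tendsto_iterate_atTop_of_drift hε hdrift hz).eventually (eventually_gt_atTop R)).exists
    · rintro ⟨n, hn⟩
      have := superlevel_subset_properBasin_of_drift hε hlarge hR hn
      rwa [properBasin, Set.mem_sdiff, iterate_mem_attractedSet_iff,
        iterate_mem_backwardOrbit_iff hx] at this
  rw [exhausted]
  exact isOpen_iUnion fun n ↦ isOpen_petal.preimage (hf.iterate n)

end Drift

section FatouCoordinate

variable {a : ℂ} {k : ℕ}

/-- The approximate Fatou coordinate of a germ `z + a z ^ (k + 1) + ⋯`, which it conjugates to a
perturbation of the translation by `1`. The division by zero makes it vanish at `0`. -/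
noncomputable def fatouCoord (a : ℂ) (k : ℕ) (z : ℂ) : ℂ := -(k * a * z ^ k)⁻¹

lemma continuousOn_fatouCoord (hk : k ≠ 0) (ha : a ≠ 0) : ContinuousOn (fatouCoord a k) {0}ᶜ := by
  refine ContinuousOn.neg (ContinuousOn.inv₀ (by fun_prop) fun z hz ↦ ?_)
  have : z ≠ 0 := hz
  positivity

lemma comap_re_fatouCoord_atTop_le (hk : k ≠ 0) (ha : a ≠ 0) :
    comap (fun z ↦ (fatouCoord a k z).re) atTop ≤ 𝓝[≠] 0 := by
  set l := comap (fun z ↦ (fatouCoord a k z).re) atTop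
  have hre : Tendsto (fun z ↦ (fatouCoord a k z).re) l atTop := tendsto_comap
  refine tendsto_id'.1 (tendsto_nhdsWithin_iff.2 ⟨?_, ?_⟩)
  · refine Metric.tendsto_nhds.2 fun ε hε ↦ ?_
    filter_upwards [hre.eventually_gt_atTop (‖k * a‖ * ε ^ k)⁻¹] with z hz
    have hlt : (‖k * a‖ * ε ^ k)⁻¹ < (‖k * a‖ * ‖z‖ ^ k)⁻¹ :=
      calc (‖k * a‖ * ε ^ k)⁻¹ < (fatouCoord a k z).re := hz
        _ ≤ ‖fatouCoord a k z‖ := re_le_norm _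
        _ = (‖k * a‖ * ‖z‖ ^ k)⁻¹ := by
          rw [fatouCoord, norm_neg, norm_inv, norm_mul (k * a), norm_pow]
    by_contra! hfar
    rw [id, dist_zero_right] at hfar
    have hpos : 0 < ‖k * a‖ := norm_pos_iff.2 (mul_ne_zero (Nat.cast_ne_zero.2 hk) ha)
    exact hlt.not_ge (by gcongr)
  · filter_upwards [hre.eventually_gt_atTop 0] with z hz h0
    simp [fatouCoord, show z = 0 from h0, hk] at hz

lemma tendsto_dslope_inv_one_add_pow {𝕜 : Type*} [NontriviallyNormedField 𝕜] (k : ℕ) :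
    Tendsto (dslope (fun u : 𝕜 ↦ ((1 + u) ^ k)⁻¹) 0) (𝓝 0) (𝓝 (-k)) := by
  have hpow : HasDerivAt (fun u : 𝕜 ↦ (1 + u) ^ k) (k * (1 + 0) ^ (k - 1) * 1) 0 :=
    ((hasDerivAt_id (0 : 𝕜)).const_add 1).pow k
  have hinv : HasDerivAt (fun u : 𝕜 ↦ ((1 + u) ^ k)⁻¹) (-k) 0 :=
    (hpow.inv (by simp)).congr_deriv (by simp)
  simpa only [ContinuousAt, dslope_same, hinv.deriv] using
    continuousAt_dslope_same.2 hinv.differentiableAt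

lemma tendsto_fatouCoord_sub {Q : ℂ → ℂ} (hk : k ≠ 0) (ha : a ≠ 0)
    (hQ : Tendsto Q (𝓝 0) (𝓝 a)) :
    Tendsto (fun z ↦ fatouCoord a k (z + z ^ (k + 1) * Q z) - fatouCoord a k z)
      (𝓝[≠] 0) (𝓝 1) := by
  set g : ℂ → ℂ := fun u ↦ ((1 + u) ^ k)⁻¹
  have hslope : Tendsto (dslope g 0) (𝓝 0) (𝓝 (-k)) := tendsto_dslope_inv_one_add_pow k
  have hincr : Tendsto (fun z ↦ z ^ k * Q z) (𝓝 0) (𝓝 0) := by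
    simpa [hk] using (continuous_pow k).continuousAt.tendsto.mul hQ
  have hlim : Tendsto (fun z ↦ -(k * a)⁻¹ * (Q z * dslope g 0 (z ^ k * Q z))) (𝓝[≠] 0) (𝓝 1) := by
    have := ((hQ.mul (hslope.comp hincr)).const_mul (-(k * a)⁻¹)).mono_left
      (nhdsWithin_le_nhds (s := {0}ᶜ))
    have hone : -(k * a)⁻¹ * (a * -(k : ℂ)) = 1 := by field_simp
    rwa [hone] at this
  refine hlim.congr' ?_
  filter_upwards [self_mem_nhdsWithin] with z (hz : z ≠ 0)
  have hfactor : z + z ^ (k + 1) * Q z = z * (1 + z ^ k * Q z) := by ring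
  have hdslope : z ^ k * Q z * dslope g 0 (z ^ k * Q z) = ((1 + z ^ k * Q z) ^ k)⁻¹ - 1 := by
    simpa [g] using sub_smul_dslope g 0 (z ^ k * Q z)
  have hcancel : Q z * dslope g 0 (z ^ k * Q z) =
      (z ^ k)⁻¹ * (((1 + z ^ k * Q z) ^ k)⁻¹ - 1) := by
    rw [← hdslope]
    field_simp
  rw [hcancel, hfactor]
  simp only [fatouCoord, mul_pow, mul_inv]
  ring

end FatouCoordinate

section Parabolic

lemma comap_sub_nhdsNE_zero {G : Type*} [AddGroup G] [TopologicalSpace G] [IsTopologicalAddGroup G]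
    (c : G) : comap (fun z ↦ z - c) (𝓝[≠] 0) = 𝓝[≠] c := by
  rw [nhdsWithin, comap_inf, nhds_translation_sub, comap_principal, nhdsWithin]
  congr 2
  ext z
  simp [sub_eq_zero]

lemma exists_eq_add_pow_mul_of_deriv_eq_one {𝕜 : Type*} [NontriviallyNormedField 𝕜] {f : 𝕜 → 𝕜}
    {c : 𝕜} (hf : AnalyticAt 𝕜 f c) (hc : IsFixedPt f c) (hderiv : deriv f c = 1)
    (hne : ¬ f =ᶠ[𝓝 c] id) :
    ∃ k ≠ 0, ∃ Q : 𝕜 → 𝕜, ContinuousAt Q c ∧ Q c ≠ 0 ∧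
      ∀ᶠ z in 𝓝 c, f z - c = (z - c) + (z - c) ^ (k + 1) * Q z := by
  obtain ⟨n, Q, hQ, hQc, heq⟩ := (hf.sub analyticAt_id).exists_eventuallyEq_pow_smul_nonzero_iff.2
    fun h ↦ hne (h.mono fun z hz ↦ sub_eq_zero.1 hz)
  simp only [Pi.sub_apply, id, smul_eq_mul] at heq
  have hn0 : n ≠ 0 := by
    rintro rfl
    exact hQc (by simpa [hc.eq] using heq.self_of_nhds.symm)
  have hn1 : n ≠ 1 := by
    rintro rfl
    have hleft : HasDerivAt (fun z ↦ f z - z) 0 c := by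
      have := hf.differentiableAt.hasDerivAt.fun_sub (hasDerivAt_id' c)
      rwa [hderiv, sub_self] at this
    have hright : HasDerivAt (fun z ↦ (z - c) ^ 1 * Q z) (Q c) c := by
      simpa using ((hasDerivAt_id' c).sub_const c).fun_mul hQ.differentiableAt.hasDerivAt
    exact hQc ((hright.congr_of_eventuallyEq heq).unique hleft)
  refine ⟨n - 1, by omega, Q, hQ.continuousAt, hQc, ?_⟩
  filter_upwards [heq] with z hz
  rw [Nat.sub_add_cancel (by omega), ← hz]
  ring

theorem isOpen_properBasin_of_deriv_eq_one {f : ℂ → ℂ} {c : ℂ} (hcont : Continuous f)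
    (hf : AnalyticAt ℂ f c) (hc : IsFixedPt f c) (hderiv : deriv f c = 1)
    (hne : ¬ f =ᶠ[𝓝 c] id) : IsOpen (properBasin f c) := by
  obtain ⟨k, hk, Q, hQ, hQc, heq⟩ := exists_eq_add_pow_mul_of_deriv_eq_one hf hc hderiv hne
  refine isOpen_properBasin_of_drift (h := fun z ↦ (fatouCoord (Q c) k (z - c)).re) hcont hc
    one_half_pos ?_ ?_ ?_
  · exact continuous_re.comp_continuousOn <| (continuousOn_fatouCoord hk hQc).comp
      (by fun_prop) fun z hz ↦ sub_ne_zero.2 hz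
  · have := comap_mono (m := fun z ↦ z - c) (comap_re_fatouCoord_atTop_le hk hQc)
    rwa [comap_comap, comap_sub_nhdsNE_zero] at this
  · have hQ0 : Tendsto (fun u ↦ Q (u + c)) (𝓝 0) (𝓝 (Q c)) :=
      hQ.tendsto.comp ((continuous_add_const c).tendsto' 0 c (zero_add c))
    have hlim := (continuous_re.tendsto 1).comp ((tendsto_fatouCoord_sub hk hQc hQ0).comp
      (tendsto_iff_comap.2 (comap_sub_nhdsNE_zero c).ge))
    filter_upwards [hlim.eventually_const_lt (show (1 / 2 : ℝ) < re 1 by norm_num),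
      nhdsWithin_le_nhds heq] with z hz hfz
    simp only [comp_apply, sub_add_cancel, ← hfz, sub_re] at hz
    linarith

theorem isOpen_properBasin_of_isOfFinOrder_deriv {f : ℂ → ℂ} {c : ℂ} (hf : Differentiable ℂ f)
    (hc : IsFixedPt f c) (hderiv : IsOfFinOrder (deriv f c)) (hne : ∀ q ≠ 0, f^[q] ≠ id) :
    IsOpen (properBasin f c) := by
  obtain ⟨q, hq, hroot⟩ := hderiv.exists_pow_eq_one
  have hfq : Differentiable ℂ f^[q] := hf.iterate q
  rw [← properBasin_iterate hf.continuous.continuousAt hc hq.ne']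
  refine isOpen_properBasin_of_deriv_eq_one hfq.continuous (hfq.analyticAt c) (hc.iterate q) ?_ ?_
  · rw [((hf c).hasDerivAt.iterate c hc q).deriv, hroot]
  · exact fun h ↦ hne q hq.ne' <| AnalyticOnNhd.eq_of_eventuallyEq
      (fun z _ ↦ hfq.analyticAt z) analyticOnNhd_id h

end Parabolic

section Nonattracting

variable {ι E : Type*} [NormedAddCommGroup E] [NormedSpace ℂ E] {l : Filter ι}
  [l.IsCountablyGenerated] {F : ι → ℂ → E} {G : ℂ → E} {c : ℂ} {r C : ℝ}

lemma tendsto_circleIntegral_of_norm_le (hr : 0 ≤ r) (hF : ∀ i, ContinuousOn (F i) (sphere c r))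
    (hC : ∀ i, ∀ z ∈ sphere c r, ‖F i z‖ ≤ C)
    (hlim : ∀ z ∈ sphere c r, Tendsto (fun i ↦ F i z) l (𝓝 (G z))) :
    Tendsto (fun i ↦ ∮ z in C(c, r), F i z) l (𝓝 (∮ z in C(c, r), G z)) := by
  have hmem (θ : ℝ) : circleMap c r θ ∈ sphere c r := circleMap_mem_sphere c hr θ
  refine intervalIntegral.tendsto_integral_filter_of_dominated_convergence (fun _ ↦ r * C)
    (.of_forall fun i ↦ ?_) (.of_forall fun i ↦ ?_) intervalIntegrable_const ?_
  · have : Continuous fun θ ↦ deriv (circleMap c r) θ • F i (circleMap c r θ) := by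
      simp only [deriv_circleMap]
      exact .smul (by fun_prop) ((hF i).comp_continuous (by fun_prop) hmem)
    exact this.aestronglyMeasurable
  · refine .of_forall fun θ _ ↦ ?_
    rw [norm_smul, deriv_circleMap, norm_mul, norm_I, norm_circleMap_zero, mul_one,
      abs_of_nonneg hr]
    exact mul_le_mul_of_nonneg_left (hC i _ (hmem θ)) hr
  · exact .of_forall fun θ _ ↦ (hlim _ (hmem θ)).const_smul _

lemma tendsto_cderiv_of_norm_le (hr : 0 < r) (hF : ∀ i, ContinuousOn (F i) (sphere c r))
    (hC : ∀ i, ∀ z ∈ sphere c r, ‖F i z‖ ≤ C)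
    (hlim : ∀ z ∈ sphere c r, Tendsto (fun i ↦ F i z) l (𝓝 (G z))) :
    Tendsto (fun i ↦ cderiv r (F i) c) l (𝓝 (cderiv r G c)) := by
  refine (tendsto_circleIntegral_of_norm_le (C := (r ^ 2)⁻¹ * C) hr.le (fun i ↦ ?_)
    (fun i z hz ↦ ?_) fun z hz ↦ (hlim z hz).const_smul _).const_smul _
  · refine .smul (.inv₀ (by fun_prop) fun z hz ↦ ?_) (hF i)
    exact pow_ne_zero 2 (sub_ne_zero.2 (ne_of_mem_sphere hz hr.ne'))
  · rw [norm_smul, norm_inv, norm_pow, mem_sphere_iff_norm.1 hz]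
    gcongr
    exact hC i z hz

theorem notMem_interior_attractedSet_of_one_le_norm_deriv {f : ℂ → ℂ}
    (hf : Differentiable ℂ f) (hc : IsFixedPt f c) (hderiv : 1 ≤ ‖deriv f c‖)
    (hbdd : Bornology.IsBounded (attractedSet f c)) : c ∉ interior (attractedSet f c) := by
  intro hint
  obtain ⟨r, hr, hball⟩ := nhds_basis_closedBall.mem_iff.1 (mem_interior_iff_mem_nhds.1 hint)
  obtain ⟨C, hC⟩ := hbdd.exists_norm_le
  have hsphere : sphere c r ⊆ attractedSet f c := sphere_subset_closedBall.trans hball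
  have hlim := tendsto_cderiv_of_norm_le (F := fun n ↦ f^[n]) (G := fun _ ↦ c) hr
    (fun n ↦ (hf.iterate n).continuous.continuousOn)
    (fun n z hz ↦ hC _ ((iterate_mem_attractedSet_iff n).2 (hsphere hz))) hsphere
  have cderiv_entire {g : ℂ → ℂ} (hg : Differentiable ℂ g) : cderiv r g c = deriv g c :=
    cderiv_eq_deriv isOpen_univ hg.differentiableOn hr (subset_univ _)
  have hpow : Tendsto (fun n ↦ ‖deriv f c‖ ^ n) atTop (𝓝 0) := by
    simpa only [cderiv_entire (hf.iterate _), cderiv_entire (differentiable_const c), deriv_const,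
      ((hf c).hasDerivAt.iterate c hc _).deriv, norm_pow, norm_zero] using hlim.norm
  exact absurd (ge_of_tendsto' hpow fun n ↦ one_le_pow₀ hderiv) (by norm_num)

end Nonattracting

section Quadratic

variable {ω : ℂ}

lemma differentiable_Pq (ω : ℂ) : Differentiable ℂ (Pq ω) := by
  unfold Pq
  fun_prop

lemma isFixedPt_Pq_zero (ω : ℂ) : IsFixedPt (Pq ω) 0 := by simp [IsFixedPt, Pq]

lemma deriv_Pq_zero (ω : ℂ) : deriv (Pq ω) 0 = ω := by
  have : HasDerivAt (Pq ω) (ω * 1 + 2 * 0 ^ 1 * 1) 0 :=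
    ((hasDerivAt_id 0).const_mul ω).add ((hasDerivAt_id 0).pow 2)
  simpa using this.deriv

lemma Pq_neg (ω : ℂ) : Pq ω (-ω) = 0 := by
  rw [Pq]
  ring

lemma iterate_Pq_ne_id (hω : ω ≠ 0) {n : ℕ} (hn : n ≠ 0) : (Pq ω)^[n] ≠ id := by
  obtain ⟨m, rfl⟩ := Nat.exists_eq_succ_of_ne_zero hn
  intro h
  have := congrFun h (-ω)
  rw [iterate_succ_apply, Pq_neg, iterate_fixed (isFixedPt_Pq_zero ω)] at this
  exact hω (neg_eq_zero.1 this.symm)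

lemma finite_Pq_preimage_singleton (ω y : ℂ) : (Pq ω ⁻¹' {y}).Finite := by
  rcases (Pq ω ⁻¹' {y}).eq_empty_or_nonempty with hempty | ⟨z, rfl⟩
  · simp [hempty]
  · refine (toFinite {z, -ω - z}).subset fun w hw ↦ ?_
    have hfactor : (w - z) * (w - (-ω - z)) = 0 := by
      have : Pq ω w = Pq ω z := hw
      simp only [Pq] at this
      linear_combination this
    exact (mul_eq_zero.1 hfactor).imp sub_eq_zero.1 sub_eq_zero.1

lemma isOpenMap_Pq (ω : ℂ) : IsOpenMap (Pq ω) := by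
  have hanalytic : AnalyticOnNhd ℂ (Pq ω) univ := fun z _ ↦ (differentiable_Pq ω).analyticAt z
  rcases hanalytic.is_constant_or_isOpen isPreconnected_univ with ⟨y, hy⟩ | hopen
  · exact absurd (finite_Pq_preimage_singleton ω y) (infinite_univ.mono fun z hz ↦ hy z hz)
  · exact fun s hs ↦ hopen s (subset_univ s) hs

lemma norm_le_norm_Pq {z : ℂ} (hz : 1 + ‖ω‖ ≤ ‖z‖) : ‖z‖ ≤ ‖Pq ω z‖ := by
  have hfactor : Pq ω z = z * (z + ω) := by
    rw [Pq]
    ring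
  have hone : 1 ≤ ‖z + ω‖ := by linarith [norm_sub_le_norm_add z ω]
  rw [hfactor, norm_mul]
  exact le_mul_of_one_le_right (norm_nonneg z) hone

lemma isBounded_attractedSet_Pq (ω : ℂ) : Bornology.IsBounded (attractedSet (Pq ω) 0) := by
  refine isBounded_closedBall.subset (t := closedBall 0 (1 + ‖ω‖)) fun z hz ↦ ?_
  rw [mem_closedBall_zero_iff]
  by_contra! hlarge
  have hescape : MapsTo (Pq ω) {y | 1 + ‖ω‖ ≤ ‖y‖} {y | 1 + ‖ω‖ ≤ ‖y‖} :=
    fun y hy ↦ le_trans hy (norm_le_norm_Pq hy)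
  have hle : 1 + ‖ω‖ ≤ ‖(0 : ℂ)‖ :=
    ge_of_tendsto' (Tendsto.norm hz) fun n ↦ hescape.iterate n hlarge.le
  rw [norm_zero] at hle
  linarith [norm_nonneg ω]

theorem isOpen_basin (hω : IsOfFinOrder ω) : IsOpen (basin ω) := by
  have hω0 : ω ≠ 0 := norm_ne_zero_iff.1 (hω.norm_eq_one.trans_ne one_ne_zero)
  exact isOpen_properBasin_of_isOfFinOrder_deriv (differentiable_Pq ω) (isFixedPt_Pq_zero ω)
    ((deriv_Pq_zero ω).symm ▸ hω) fun _ ↦ iterate_Pq_ne_id hω0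

theorem zero_notMem_interior_basinAug (hω : 1 ≤ ‖ω‖) : 0 ∉ interior (basinAug ω) :=
  notMem_interior_attractedSet_of_one_le_norm_deriv (differentiable_Pq ω) (isFixedPt_Pq_zero ω)
    ((deriv_Pq_zero ω).symm ▸ hω) (isBounded_attractedSet_Pq ω)

end Quadratic

theorem basin_open_and_decomposition_general {ω : ℂ} (hω : IsOfFinOrder ω) :
    IsOpen (basin ω) ∧
    basin ω = interior (basinAug ω) ∧
    basinAug ω = basin ω ∪ preFixed ω ∧
    Disjoint (basin ω) (preFixed ω) ∧
    (preFixed ω).Countable := by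
  refine ⟨isOpen_basin hω, ?_, ?_, disjoint_sdiff_left, ?_⟩
  · exact properBasin_eq_interior_attractedSet (differentiable_Pq ω).continuous (isOpenMap_Pq ω)
      (isOpen_basin hω) (zero_notMem_interior_basinAug hω.norm_eq_one.ge)
  · exact (sdiff_union_of_subset (backwardOrbit_subset_attractedSet (isFixedPt_Pq_zero ω))).symm
  · exact countable_backwardOrbit (finite_Pq_preimage_singleton ω) 0

/-- The parabolic basin `Λ_ω` is open and equals the interior of
the augmented basin `Λ̃_ω`; consequently `Λ̃_ω` is the disjoint union of the open
set `Λ_ω` and the countable backward orbit of the parabolic fixed point. -/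
theorem basin_open_and_decomposition
    (p q : ℕ) (hq : 2 ≤ q) (hp0 : 0 < p) (hpq : p < q) (hcop : Nat.Coprime p q)
    (ω : ℂ) (hω : ω = Complex.exp (2 * Real.pi * Complex.I * (p : ℂ) / (q : ℂ))) :
    IsOpen (basin ω) ∧
    basin ω = interior (basinAug ω) ∧
    basinAug ω = basin ω ∪ preFixed ω ∧
    Disjoint (basin ω) (preFixed ω) ∧
    (preFixed ω).Countable := by
  have hq0 : q ≠ 0 := by omega
  rw [mul_div_assoc] at hω
  exact basin_open_and_decomposition_general
    (hω ▸ (isPrimitiveRoot_exp_of_coprime p q hq0 hcop).isOfFinOrder hq0)
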